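/- Consider a feasible rooted PTC instance that is segment-complete: for every segment j ∈ S and every subpath P' of the u_j–v_j path, S contains a segment whose path is P' with the same supply s_j and the same cost c_j. Then there exist a partition E = E_1 ∪ … ∪ E_p of the edge set of T into edge sets of paths, and subsets S_1,…,S_p ⊆ S, such that for each i every edge of E_i is covered by some segment of S_i, and Σ_{i=1}^p Σ_{j∈S_i} c_j ≤ 2·min{Σ_{j∈Q} c_j : Q ⊆ S feasible}. -/

import Mathlib

/-!
The theorem holds because any feasible `Q` can be distributed over paths so that each
segment of `Q` is used in at most two of them; applying this to a cheapest feasible `Q` gives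
the bound.

Order the segments of `Q` by supply, breaking ties so that the order is strict. For each edge `e`
let `m e` be the largest segment of `Q` whose path contains `e`; it covers `e` because `Q` is
feasible. Assign to every edge a *main* segment `M e`, working down from the root: `e` inherits
the main segment of the edge above it whenever `e` still lies on the path of that segment, and
otherwise `M e = m e`. The classes `P_s = {e | M e = s}` partition the edges. Each of them is
the part of the path of `s` below some vertex (`mainSeg_isPath`): once `s` is a main segment, it stays so
all the way down to its lower end (`mainSeg_down`).

Let `P_s` use `m e` for every `e ∈ P_s`. If `j = m e ≠ s`, then `j` does not contain the top edge of
`P_s`: there `s` is the largest segment, so `s` would be larger than `j`, and as `s` also contains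
`e` this contradicts `j = m e`. Hence the top edge of `j` lies in `P_s`, which determines `s`
(`mainSeg_top`). So `j` is used only in `P_j` and in the class of its own top edge.
-/


/-- `OnChain parent x w`: vertex `w` lies on the chain from `x` up to the root of a rooted
tree given by its parent map (i.e. `w` is obtained from `x` by iterating `parent`). -/
def OnChain {V : Type*} (parent : V → V) (x w : V) : Prop :=
  ∃ k : ℕ, parent^[k] x = w

/-- In a rooted tree given by a parent map with root `root`, each edge is identified with
its lower endpoint, a vertex `≠ root`. Segment `j` runs from `u j` up to its ancestor `v j`
and has priority supply `sup j`; it covers edge `e` (of priority demand `dem e`) iff `e`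
lies on the `u j`–`v j` path and `sup j ≥ dem e`. -/
def TreeCovers {V ι : Type*} {root : V} (parent : V → V) (u v : ι → V) (sup : ι → ℕ)
    (dem : {w : V // w ≠ root} → ℕ) (j : ι) (e : {w : V // w ≠ root}) : Prop :=
  OnChain parent (u j) e.1 ∧ ¬ OnChain parent (v j) e.1 ∧ dem e ≤ sup j

/-- `P` is the edge set of a path in the tree: the symmetric difference of the root-chains
of two vertices `x` and `y` (the edge set of the unique `x`–`y` path). -/
def IsPathEdgeSet {V : Type*} (parent : V → V) (root : V)
    (P : Set {w : V // w ≠ root}) : Prop :=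
  ∃ x y : V, P = {e | (OnChain parent x e.1 ∧ ¬ OnChain parent y e.1) ∨
                      (OnChain parent y e.1 ∧ ¬ OnChain parent x e.1)}

open scoped Classical

/-! ### Chains to the root and depth -/

section Chains

variable {V : Type*} {parent : V → V}

theorem OnChain.self (x : V) : OnChain parent x x := ⟨0, rfl⟩

theorem OnChain.step (x : V) : OnChain parent x (parent x) := ⟨1, rfl⟩

theorem OnChain.trans {x y z : V} (h : OnChain parent x y) (h' : OnChain parent y z) :
    OnChain parent x z := by
  obtain ⟨k, rfl⟩ := h
  obtain ⟨l, rfl⟩ := h'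
  exact ⟨l + k, Function.iterate_add_apply _ _ _ _⟩

theorem OnChain.total {x y z : V} (h : OnChain parent x y) (h' : OnChain parent x z) :
    OnChain parent y z ∨ OnChain parent z y := by
  obtain ⟨k, rfl⟩ := h
  obtain ⟨l, rfl⟩ := h'
  rcases le_total k l with hkl | hkl
  · left
    refine ⟨l - k, ?_⟩
    rw [← Function.iterate_add_apply, Nat.sub_add_cancel hkl]
  · right
    refine ⟨k - l, ?_⟩
    rw [← Function.iterate_add_apply, Nat.sub_add_cancel hkl]

theorem OnChain.eq_or_parent {x y : V} (h : OnChain parent x y) :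
    y = x ∨ OnChain parent (parent x) y := by
  obtain ⟨k, rfl⟩ := h
  cases k with
  | zero => exact Or.inl rfl
  | succ k => exact Or.inr ⟨k, rfl⟩

theorem exists_depth {root : V} (hreach : ∀ w : V, OnChain parent w root) :
    ∃ d : V → ℕ, ∀ w, w ≠ root → d w = d (parent w) + 1 := by
  refine ⟨fun w => Nat.find (hreach w), fun w hw => ?_⟩
  refine (Nat.find_eq_iff _).2 ⟨?_, ?_⟩
  · exact Nat.find_spec (hreach (parent w))
  · intro n hn
    cases n with
    | zero => exact hw
    | succ n => exact Nat.find_min (hreach (parent w)) (Nat.lt_of_succ_lt_succ hn)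

theorem OnChain.depth_le {root : V} (hroot : parent root = root) {d : V → ℕ}
    (hd : ∀ w, w ≠ root → d w = d (parent w) + 1) {x y : V} (h : OnChain parent x y) :
    d y ≤ d x := by
  obtain ⟨k, rfl⟩ := h
  induction k generalizing x with
  | zero => exact le_rfl
  | succ k ih =>
    refine (ih (x := parent x)).trans ?_
    by_cases hx : x = root
    · rw [hx, hroot]
    · rw [hd x hx]
      exact Nat.le_succ _

end Chains

/-! ### Main segments -/

section MainSegments

variable {V ι : Type*} {parent : V → V} {root : V} {d : V → ℕ} {u v : ι → V} {m M : V → ι}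

/-- The edge above `w` lies on the path of segment `j`, whatever the priorities. -/
def OnSeg (parent : V → V) (u v : ι → V) (j : ι) (w : V) : Prop :=
  OnChain parent (u j) w ∧ ¬ OnChain parent (v j) w

/-- `M` is the main-segment assignment arising from `m`: an edge inherits the main segment of
the edge above it if it lies on that segment's path, and otherwise has main segment `m w`. The values
at `root`, which is not the lower end of an edge, are irrelevant. -/
def IsMain (parent : V → V) (root : V) (u : ι → V) (m M : V → ι) : Prop :=
  ∀ w, w ≠ root → M w =
    if parent w ≠ root ∧ OnChain parent (u (M (parent w))) w then M (parent w) else m w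

theorem exists_isMain (hd : ∀ w, w ≠ root → d w = d (parent w) + 1) (u : ι → V) (m : V → ι) :
    ∃ M : V → ι, IsMain parent root u m M := by
  -- Recursion on the depth, carried as the numerical argument of `F`.
  let F : ℕ → V → ι := fun n => Nat.rec m
    (fun _ f w => if parent w ≠ root ∧ OnChain parent (u (f (parent w))) w
      then f (parent w) else m w) n
  refine ⟨fun w => F (d w) w, fun w hw => ?_⟩
  change F (d w) w = _
  rw [hd w hw]

theorem ne_root_of_onSeg (hreach : ∀ w : V, OnChain parent w root) {j : ι} {w : V}
    (h : OnSeg parent u v j w) : w ≠ root := by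
  rintro rfl
  exact h.2 (hreach _)

theorem mainSeg_onSeg (hd : ∀ w, w ≠ root → d w = d (parent w) + 1)
    (hm : ∀ w, w ≠ root → OnSeg parent u v (m w) w) (hM : IsMain parent root u m M)
    (w : V) (hw : w ≠ root) : OnSeg parent u v (M w) w := by
  induction hn : d w generalizing w with
  | zero =>
    have := hd w hw
    omega
  | succ n ih =>
    have hdw := hd w hw
    rw [hM w hw]
    split_ifs with h
    · refine ⟨h.2, fun hv => ?_⟩
      exact (ih (parent w) h.1 (by omega)).2 (hv.trans (OnChain.step w))
    · exact hm w hw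

/-- Below an edge with main segment `s`, every edge on the path of `s` has main segment `s`. -/
theorem mainSeg_down (hroot : parent root = root) (hM : IsMain parent root u m M)
    {s : ι} {x w : V} (hw : w ≠ root) (hws : M w = s)
    (hx : OnChain parent (u s) x) (hxw : OnChain parent x w) : M x = s := by
  obtain ⟨k, hk⟩ := hxw
  induction k generalizing x with
  | zero =>
    have : x = w := hk
    rw [this, hws]
  | succ k ih =>
    have hp : M (parent x) = s := ih (hx.trans (OnChain.step x)) hk
    have hpr : parent x ≠ root := by
      intro h
      rw [Function.iterate_succ_apply, h, Function.iterate_fixed hroot] at hk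
      exact hw hk.symm
    have hxr : x ≠ root := by
      rintro rfl
      exact hpr hroot
    rw [hM x hxr, hp, if_pos ⟨hpr, hx⟩]

/-- A nonempty class has a top edge: it lies above all edges of the class, and the
main segment is the largest one there. -/
theorem exists_top (hroot : parent root = root)
    (hd : ∀ w, w ≠ root → d w = d (parent w) + 1)
    (hm : ∀ w, w ≠ root → OnSeg parent u v (m w) w) (hM : IsMain parent root u m M)
    {s : ι} {e : V} (he : e ≠ root) (hes : M e = s) :
    ∃ w, w ≠ root ∧ M w = s ∧ m w = s ∧
      ∀ x, x ≠ root → M x = s → OnChain parent x w ∧ d w ≤ d x := by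
  have hex : ∃ n, ∃ w, w ≠ root ∧ M w = s ∧ d w = n := ⟨_, e, he, hes, rfl⟩
  obtain ⟨w, hw, hws, hwd⟩ := Nat.find_spec hex
  have hmin : ∀ x, x ≠ root → M x = s → d w ≤ d x := fun x hx hxs => by
    rw [hwd]
    exact Nat.find_min' hex ⟨x, hx, hxs, rfl⟩
  have hon := mainSeg_onSeg hd hm hM
  refine ⟨w, hw, hws, ?_, fun x hx hxs => ⟨?_, hmin x hx hxs⟩⟩
  · have h := hM w hw
    split_ifs at h with hc
    · have h1 := hmin (parent w) hc.1 (h.symm.trans hws)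
      have h2 := hd w hw
      omega
    · exact h.symm.trans hws
  · have h1 := (hon x hx).1
    have h2 := (hon w hw).1
    rw [hxs] at h1
    rw [hws] at h2
    rcases h1.total h2 with h | h
    · exact h
    · rcases h.eq_or_parent with rfl | h'
      · exact OnChain.self _
      · have h3 := h'.depth_le hroot hd
        have h4 := hmin x hx hxs
        have h5 := hd w hw
        omega

theorem mainSeg_isPath (hroot : parent root = root)
    (hd : ∀ w, w ≠ root → d w = d (parent w) + 1)
    (hm : ∀ w, w ≠ root → OnSeg parent u v (m w) w) (hM : IsMain parent root u m M) (s : ι) :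
    IsPathEdgeSet parent root {e : {w : V // w ≠ root} | M e.1 = s} := by
  by_cases hne : ∃ e, e ≠ root ∧ M e = s
  · obtain ⟨e, he, hes⟩ := hne
    obtain ⟨w, hw, hws, -, htop⟩ := exists_top hroot hd hm hM he hes
    have huw : OnChain parent (u s) w := hws ▸ (mainSeg_onSeg hd hm hM w hw).1
    -- The class runs from the lower end of `s` up to the upper end of the top edge.
    refine ⟨u s, parent w, Set.ext fun x => ⟨fun hx => Or.inl ⟨?_, fun h => ?_⟩, ?_⟩⟩
    · have hx' : M x.1 = s := hx
      exact hx' ▸ (mainSeg_onSeg hd hm hM x.1 x.2).1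
    · have h1 := h.depth_le hroot hd
      have h2 := (htop x.1 x.2 hx).2
      have h3 := hd w hw
      omega
    · rintro (⟨h1, h2⟩ | ⟨h1, h2⟩)
      · refine mainSeg_down hroot hM hw hws h1 ?_
        rcases h1.total huw with h | h
        · exact h
        · rcases h.eq_or_parent with h' | h'
          · rw [h']
            exact OnChain.self _
          · exact absurd h' h2
      · exact absurd ((huw.trans (OnChain.step w)).trans h1) h2
  · refine ⟨root, root, Set.ext fun x => ⟨fun hx => absurd ⟨x.1, x.2, hx⟩ hne, ?_⟩⟩
    rintro (⟨h1, h2⟩ | ⟨h1, h2⟩) <;> exact absurd h1 h2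

/-- If the path of `j` has an edge, then `t` is its top edge; otherwise `t` is irrelevant. -/
theorem exists_segTop (hroot : parent root = root) (hreach : ∀ w : V, OnChain parent w root)
    (hd : ∀ w, w ≠ root → d w = d (parent w) + 1) (u v : ι → V) (j : ι) :
    ∃ t : V, ∀ e, OnSeg parent u v j e → OnSeg parent u v j t ∧ OnChain parent e t := by
  by_cases hne : ∃ e, OnSeg parent u v j e
  · have hex : ∃ n, ∃ t, OnSeg parent u v j t ∧ d t = n := ⟨_, _, hne.choose_spec, rfl⟩
    obtain ⟨t, ht, htd⟩ := Nat.find_spec hex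
    refine ⟨t, fun e he => ⟨ht, ?_⟩⟩
    rcases he.1.total ht.1 with h | h
    · exact h
    · rcases h.eq_or_parent with rfl | h'
      · exact OnChain.self _
      · have h1 := h'.depth_le hroot hd
        have h2 := hd t (ne_root_of_onSeg hreach ht)
        have h3 := Nat.find_min' hex ⟨e, he, rfl⟩
        omega
  · exact ⟨root, fun e he => absurd ⟨e, he⟩ hne⟩

/-- A segment used in the class of another segment `s` has its top edge in that class. Here `r`
is the ranking of the segments for which `m` is the maximum. -/
theorem mainSeg_top (hroot : parent root = root)
    (hd : ∀ w, w ≠ root → d w = d (parent w) + 1)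
    (hm : ∀ w, w ≠ root → OnSeg parent u v (m w) w) (hM : IsMain parent root u m M)
    {Q : Finset ι} {r : ι → ℕ} (hr : Function.Injective r)
    (hmQ : ∀ w, w ≠ root → m w ∈ Q)
    (hmax : ∀ w, w ≠ root → ∀ j ∈ Q, OnSeg parent u v j w → r j ≤ r (m w))
    {e t : V} (he : e ≠ root) (hne : m e ≠ M e)
    (ht : OnSeg parent u v (m e) t) (het : OnChain parent e t) : M t = M e := by
  obtain ⟨w, hw, hws, hmw, htop⟩ := exists_top hroot hd hm hM he rfl
  have hew := (htop e he rfl).1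
  have hMe := mainSeg_onSeg hd hm hM e he
  have hnot : ¬ OnSeg parent u v (m e) w := fun h => by
    have h1 := hmax w hw _ (hmQ e he) h
    have h2 := hmax e he (M e) (hmw ▸ hmQ w hw) hMe
    rw [hmw] at h1
    exact hne (hr (le_antisymm h1 h2))
  rcases hew.total het with h | h
  · exact absurd ⟨(hm e he).1.trans hew, fun h' => ht.2 (h'.trans h)⟩ hnot
  · exact mainSeg_down hroot hM hw hws (hMe.1.trans het) h

end MainSegments

/-! ### Distributing a feasible set over the paths -/

/-- Every feasible `Q` can be distributed over paths at no more than twice its cost. The paths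
are indexed by the segments, most of them possibly empty. -/
theorem exists_decomposition {V ι : Type*} [Fintype ι] [Nonempty ι]
    (root : V) (parent : V → V)
    (hroot : parent root = root) (hreach : ∀ w : V, OnChain parent w root)
    (u v : ι → V) (sup : ι → ℕ) (dem : {w : V // w ≠ root} → ℕ)
    (c : ι → ℝ) (hc : ∀ j, 0 ≤ c j) (Q : Finset ι)
    (hQ : ∀ e : {w : V // w ≠ root}, ∃ j ∈ Q, TreeCovers parent u v sup dem j e) :
    ∃ (M : {w : V // w ≠ root} → ι) (S : ι → Finset ι),
      (∀ s, IsPathEdgeSet parent root {e | M e = s}) ∧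
      (∀ e, ∃ j ∈ S (M e), TreeCovers parent u v sup dem j e) ∧
      ∑ s, ∑ j ∈ S s, c j ≤ 2 * ∑ j ∈ Q, c j := by
  obtain ⟨d, hd⟩ := exists_depth hreach
  -- An injective ranking refining the order by supply.
  obtain ⟨r, hr, hrs⟩ : ∃ r : ι → ℕ, Function.Injective r ∧
      ∀ j k, r j ≤ r k → sup j ≤ sup k := by
    let N := Fintype.card ι
    let f := Fintype.equivFin ι
    have hmono : ∀ j k, sup j * N + f j ≤ sup k * N + f k → sup j ≤ sup k := by
      intro j k h
      by_contra! hlt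
      have h1 : (sup k + 1) * N ≤ sup j * N := Nat.mul_le_mul_right _ hlt
      have h2 : (f k : ℕ) < N := (f k).2
      rw [Nat.succ_mul] at h1
      omega
    refine ⟨fun j => sup j * N + f j, fun j k h => ?_, hmono⟩
    have hs : sup j = sup k := le_antisymm (hmono j k h.le) (hmono k j h.ge)
    have h' : sup j * N + f j = sup k * N + f k := h
    rw [hs] at h'
    exact f.injective (Fin.ext (by omega))
  have hmex : ∀ w : V, ∃ j : ι, w ≠ root → j ∈ Q ∧ OnSeg parent u v j w ∧
      ∀ k ∈ Q, OnSeg parent u v k w → r k ≤ r j := by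
    intro w
    by_cases hw : w = root
    · exact ⟨Classical.arbitrary ι, fun h => absurd hw h⟩
    · obtain ⟨j₀, hj₀, hcov⟩ := hQ ⟨w, hw⟩
      obtain ⟨j, hj, hjmax⟩ := (Q.filter fun k => OnSeg parent u v k w).exists_max_image r
        ⟨j₀, Finset.mem_filter.2 ⟨hj₀, hcov.1, hcov.2.1⟩⟩
      rw [Finset.mem_filter] at hj
      exact ⟨j, fun _ => ⟨hj.1, hj.2, fun k hk hkw => hjmax k (Finset.mem_filter.2 ⟨hk, hkw⟩)⟩⟩
  choose m hmspec using hmex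
  have hmQ := fun w hw => (hmspec w hw).1
  have hm := fun w hw => (hmspec w hw).2.1
  have hmax := fun w hw => (hmspec w hw).2.2
  obtain ⟨M, hM⟩ := exists_isMain hd u m
  choose T hT using exists_segTop hroot hreach hd u v
  refine ⟨fun e => M e.1, fun s => Q.filter fun j => ∃ e, e ≠ root ∧ M e = s ∧ m e = j,
    mainSeg_isPath hroot hd hm hM, fun e => ⟨m e.1, ?_, (hm _ e.2).1, (hm _ e.2).2, ?_⟩, ?_⟩
  · exact Finset.mem_filter.2 ⟨hmQ _ e.2, e.1, e.2, rfl, rfl⟩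
  · obtain ⟨j, hj, h1, h2, h3⟩ := hQ e
    exact h3.trans (hrs _ _ (hmax e.1 e.2 j hj ⟨h1, h2⟩))
  · -- `j` is charged only in its own class and in the class of its top edge.
    calc ∑ s, ∑ j ∈ Q.filter (fun j => ∃ e, e ≠ root ∧ M e = s ∧ m e = j), c j
        ≤ ∑ s, ∑ j ∈ Q, ((if j = s then c j else 0) + if M (T j) = s then c j else 0) := by
          refine Finset.sum_le_sum fun s _ => ?_
          rw [Finset.sum_filter]
          refine Finset.sum_le_sum fun j _ => ?_
          have hcj := hc j
          by_cases h : ∃ e, e ≠ root ∧ M e = s ∧ m e = j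
          · rw [if_pos h]
            obtain ⟨e, he, hMe, hme⟩ := h
            by_cases hjs : j = s
            · rw [if_pos hjs]
              split_ifs <;> linarith
            · have hon : OnSeg parent u v j e := hme ▸ hm e he
              obtain ⟨h1, h2⟩ := hT j e hon
              have := mainSeg_top hroot hd hm hM hr hmQ hmax he
                (by rw [hme, hMe]; exact hjs) (t := T j) (by rw [hme]; exact h1) h2
              rw [if_pos (this.trans hMe), if_neg hjs, zero_add]
          · rw [if_neg h]
            split_ifs <;> linarith
      _ = 2 * ∑ j ∈ Q, c j := by
          rw [Finset.sum_comm, Finset.mul_sum]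
          refine Finset.sum_congr rfl fun j _ => ?_
          rw [Finset.sum_add_distrib, Finset.sum_ite_eq, Finset.sum_ite_eq]
          simp only [Finset.mem_univ, if_true]
          ring

/-- For every feasible, segment-complete rooted PTC instance there are a
partition of the edges of the tree into edge sets of paths `E_1, …, E_p` and sets of
segments `S_1, …, S_p` such that `S_i` covers every edge of `E_i` and the total cost of the
`S_i` is at most twice the minimum cost of a feasible solution. -/
theorem ptc_two_approximate_decomposition (V ι : Type*) [Fintype V] [DecidableEq V]
    [Fintype ι]
    (root : V) (parent : V → V)
    (hroot : parent root = root) (hreach : ∀ w : V, OnChain parent w root)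
    (u v : ι → V) (hanc : ∀ j, OnChain parent (u j) (v j))
    (sup : ι → ℕ) (dem : {w : V // w ≠ root} → ℕ)
    (c : ι → ℝ) (hc : ∀ j, 0 ≤ c j)
    -- segment-completeness: every subpath of a segment's path appears with the same
    -- supply and cost
    (hcomplete : ∀ j : ι, ∀ x y : V,
      OnChain parent (u j) x → OnChain parent x y → OnChain parent y (v j) →
      ∃ j' : ι, u j' = x ∧ v j' = y ∧ sup j' = sup j ∧ c j' = c j)
    -- feasibility of the instance
    (hfeas : ∃ Q : Finset ι,
      ∀ e : {w : V // w ≠ root}, ∃ j ∈ Q, TreeCovers parent u v sup dem j e) :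
    ∃ (p : ℕ) (P : Fin p → Set {w : V // w ≠ root}) (Ss : Fin p → Finset ι),
      (∀ i, IsPathEdgeSet parent root (P i)) ∧
      (Pairwise fun i i' => Disjoint (P i) (P i')) ∧
      (⋃ i, P i) = Set.univ ∧
      (∀ i, ∀ e ∈ P i, ∃ j ∈ Ss i, TreeCovers parent u v sup dem j e) ∧
      ∀ Q : Finset ι,
        (∀ e : {w : V // w ≠ root}, ∃ j ∈ Q, TreeCovers parent u v sup dem j e) →
        ∑ i, ∑ j ∈ Ss i, c j ≤ 2 * ∑ j ∈ Q, c j := by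
  obtain ⟨Q₀, hQ₀⟩ := hfeas
  rcases isEmpty_or_nonempty ι with hι | hι
  · -- Without segments there are no edges.
    have : IsEmpty {w : V // w ≠ root} := ⟨fun e => hι.elim (hQ₀ e).choose⟩
    exact ⟨0, Fin.elim0, Fin.elim0, fun i => i.elim0, fun i => i.elim0,
      Subsingleton.elim _ _, fun i => i.elim0, fun Q _ => by
        simp [Finset.eq_empty_of_isEmpty Q]⟩
  · obtain ⟨Q, hQ, hQmin⟩ := (Finset.univ.filter fun Q : Finset ι =>
        ∀ e : {w : V // w ≠ root}, ∃ j ∈ Q, TreeCovers parent u v sup dem j e).exists_min_image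
      (fun Q => ∑ j ∈ Q, c j) ⟨Q₀, Finset.mem_filter.2 ⟨Finset.mem_univ _, hQ₀⟩⟩
    obtain ⟨M, S, hpath, hcov, hcost⟩ := exists_decomposition root parent hroot hreach u v sup
      dem c hc Q (Finset.mem_filter.1 hQ).2
    let f := (Fintype.equivFin ι).symm
    refine ⟨Fintype.card ι, fun i => {e | M e = f i}, fun i => S (f i), fun i => hpath _,
      fun i i' hii => Set.disjoint_left.2 fun e he he' => hii (f.injective (he.symm.trans he')),
      Set.eq_univ_of_forall fun e => Set.mem_iUnion.2 ⟨f.symm (M e), ?_⟩,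
      fun i e he => ?_, fun Q' hQ' => ?_⟩
    · exact (f.apply_symm_apply (M e)).symm
    · have he' : M e = f i := he
      change ∃ j ∈ S (f i), TreeCovers parent u v sup dem j e
      rw [← he']
      exact hcov e
    · rw [Equiv.sum_comp f fun s => ∑ j ∈ S s, c j]
      have := hQmin Q' (Finset.mem_filter.2 ⟨Finset.mem_univ _, hQ'⟩)
      linarith
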